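/- Let R = k[x_1,...,x_n] with k a field, and let P be a p×q homogeneous matrix over the graded dual k[X] = ⊕_j Hom_k(R_j, k) (divided powers), viewed as a map P: ⊕_{j=1}^p R(b_j) → ⊕_{i=1}^q k[X](a_i). Then there is a natural isomorphism of graded R-modules M(Pᵗ) ≅ Hom_k(M(P), k), where M(P) = ⊕_j R(b_j)/Ann_R(P) and Ann_R(P) = { φ : ⟨P_i, φ⟩ = 0 for all rows P_i }. -/

import Mathlib

open MvPolynomial TensorProduct

variable {k : Type*} [Field k]


/-- The contragredient scalar action `(r • f) m = f (r • m)`. -/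
noncomputable def contraSMul {R M : Type*} [CommRing R] [Algebra k R]
    [AddCommGroup M] [Module k M] [Module R M] [IsScalarTower k R M]
    (r : R) (f : M →ₗ[k] k) : M →ₗ[k] k where
  toFun m := f (r • m)
  map_add' a b := by
    show f (r • (a + b)) = f (r • a) + f (r • b)
    rw [smul_add, map_add]
  map_smul' c a := by
    show f (r • c • a) = c • f (r • a)
    rw [smul_comm r c a, map_smul]

/-- The contragredient `R`-module structure on the `k`-linear dual of an `R`-module `M`. -/
noncomputable instance contragredientModule
    {R M : Type*} [CommRing R] [Algebra k R]
    [AddCommGroup M] [Module k M] [Module R M] [IsScalarTower k R M] :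
    Module R (M →ₗ[k] k) where
  smul := contraSMul
  one_smul f := LinearMap.ext fun m => by
    show f ((1 : R) • m) = f m
    rw [one_smul]
  mul_smul r s f := LinearMap.ext fun m => by
    show f ((r * s) • m) = f (s • r • m)
    rw [mul_comm, mul_smul]
  smul_zero r := LinearMap.ext fun m => by
    show (0 : M →ₗ[k] k) (r • m) = 0
    simp
  smul_add r f g := LinearMap.ext fun m => by
    show (f + g) (r • m) = f (r • m) + g (r • m)
    simp
  add_smul r s f := LinearMap.ext fun m => by
    show f ((r + s) • m) = f (r • m) + f (s • m)
    rw [add_smul, map_add]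
  zero_smul f := LinearMap.ext fun m => by
    show f ((0 : R) • m) = 0
    rw [zero_smul, map_zero]

variable {n : ℕ}

/-- A functional on `R = k[x_1,…,x_n]` lies in the graded dual (the divided power
algebra `k[X]`) iff it vanishes on all monomials of sufficiently large degree. -/
def IsDividedPower (f : MvPolynomial (Fin n) k →ₗ[k] k) : Prop :=
  ∃ N : ℕ, ∀ u : Fin n →₀ ℕ, N ≤ u.sum (fun _ e => e) →
    f (monomial u 1) = 0

variable {p q : ℕ}

/-- The annihilator `Ann_R(P)` of a `q × p` matrix `P` in divided powers:
all `φ ∈ ⊕_j R` with `⟨P_i, φ⟩ = Σ_j φ_j · P_{ij} = 0` for every row `i`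
(the action being the contraction action of `R` on its graded dual). -/
noncomputable def annP (P : Fin q → Fin p → (MvPolynomial (Fin n) k →ₗ[k] k)) :
    Submodule (MvPolynomial (Fin n) k) (Fin p → MvPolynomial (Fin n) k) where
  carrier := {φ | ∀ i, ∑ j, φ j • P i j = 0}
  add_mem' := fun {a b} ha hb i => by
    have : ∀ j ∈ Finset.univ, ((a + b) j) • P i j = a j • P i j + b j • P i j :=
      fun j _ => by rw [Pi.add_apply, add_smul]
    rw [Finset.sum_congr rfl this, Finset.sum_add_distrib, ha i, hb i, add_zero]
  zero_mem' := fun i => by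
    have : ∀ j ∈ Finset.univ,
        ((0 : Fin p → MvPolynomial (Fin n) k) j) • P i j = 0 :=
      fun j _ => by rw [Pi.zero_apply, zero_smul]
    rw [Finset.sum_congr rfl this, Finset.sum_const_zero]
  smul_mem' := fun r a ha => fun i => by
    have : ∀ j ∈ Finset.univ, ((r • a) j) • P i j = r • (a j • P i j) :=
      fun j _ => by rw [Pi.smul_apply, smul_eq_mul, mul_smul]
    rw [Finset.sum_congr rfl this, ← Finset.smul_sum, ha i, smul_zero]

/-- The module `M(P) = (⊕_j R) / Ann_R(P)` defined by a matrix `P` in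
divided powers. -/
noncomputable abbrev MP (P : Fin q → Fin p → (MvPolynomial (Fin n) k →ₗ[k] k)) :
    Type _ :=
  (Fin p → MvPolynomial (Fin n) k) ⧸ annP P

theorem R_smul_dual_apply {R M : Type*} [CommRing R] [Algebra k R]
    [AddCommGroup M] [Module k M] [Module R M] [IsScalarTower k R M]
    (r : R) (f : M →ₗ[k] k) (m : M) : (r • f) m = f (r • m) := rfl

theorem mem_annP_iff (P : Fin q → Fin p → (MvPolynomial (Fin n) k →ₗ[k] k))
    (φ : Fin p → MvPolynomial (Fin n) k) :
    φ ∈ annP P ↔ ∀ ψ : Fin q → MvPolynomial (Fin n) k,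
      ∑ i, ∑ j, P i j (φ j * ψ i) = 0 := by
  constructor
  · intro h ψ
    refine Finset.sum_eq_zero fun i _ => ?_
    have := congrArg (fun f => f (ψ i)) (h i)
    simpa [LinearMap.sum_apply, R_smul_dual_apply] using this
  · intro h i
    refine LinearMap.ext fun m => ?_
    have := h (Pi.single i m)
    rw [Finset.sum_eq_single i] at this
    · simpa [LinearMap.sum_apply, R_smul_dual_apply] using this
    · intro b _ hb
      simp [Pi.single_eq_of_ne hb]
    · simp

theorem MP_finite (P : Fin q → Fin p → (MvPolynomial (Fin n) k →ₗ[k] k))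
    (hP : ∀ i j, IsDividedPower (P i j)) : Module.Finite k (MP P) := by
  choose N hN using hP
  let N0 : ℕ := ∑ i, ∑ j, N i j
  have hle : ∀ i j, N i j ≤ N0 := fun i j =>
    (Finset.single_le_sum (f := fun j => N i j) (fun _ _ => Nat.zero_le _)
      (Finset.mem_univ j)).trans
    (Finset.single_le_sum (f := fun i => ∑ j, N i j) (fun _ _ => Nat.zero_le _)
      (Finset.mem_univ i))
  let g : Fin p × (Fin n →₀ ℕ) → MP P := fun x =>
    (annP P).mkQ (Pi.single x.1 (monomial x.2 1))
  let S : Set (Fin p × (Fin n →₀ ℕ)) := Set.univ ×ˢ {u | u.degree ≤ N0}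
  have hS : S.Finite := Set.finite_univ.prod (Finsupp.finite_of_degree_le N0)
  have hmem : ∀ j u, g (j, u) ∈ Submodule.span k (g '' S) := by
    intro j u
    by_cases hu : u.degree ≤ N0
    · exact Submodule.subset_span ⟨(j, u), ⟨trivial, hu⟩, rfl⟩
    · have : g (j, u) = 0 := by
        refine (Submodule.Quotient.mk_eq_zero _).2 ?_
        intro i
        rw [Finset.sum_eq_single j]
        · rw [Pi.single_eq_same]
          refine MvPolynomial.basisMonomials _ _ |>.ext fun v => ?_
          rw [R_smul_dual_apply]
          simp only [coe_basisMonomials, smul_eq_mul, monomial_mul, mul_one,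
            LinearMap.zero_apply]
          apply hN i j
          have h1 : (u + v).degree = u.degree + v.degree := map_add _ _ _
          have h2 : (u + v).sum (fun _ e => e) = (u + v).degree := rfl
          have := hle i j
          omega
        · intro b _ hb
          rw [Pi.single_eq_of_ne hb, zero_smul]
        · simp
      rw [this]
      exact zero_mem _
  refine ⟨Submodule.fg_def.2 ⟨g '' S, hS.image g, ?_⟩⟩
  rw [eq_top_iff]
  rintro x -
  obtain ⟨φ, rfl⟩ := (annP P).mkQ_surjective x
  rw [← Finset.univ_sum_single φ, map_sum]
  refine Submodule.sum_mem _ fun j _ => ?_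
  induction φ j using MvPolynomial.induction_on' with
  | monomial u a =>
    have : (annP P).mkQ (Pi.single j (monomial u a)) = a • g (j, u) := by
      have h : (Pi.single j (monomial u a) : Fin p → MvPolynomial (Fin n) k)
          = a • Pi.single j (monomial u 1) := by
        rw [← Pi.single_smul, smul_monomial, smul_eq_mul, mul_one]
      rw [h]
      rfl
    rw [this]
    exact Submodule.smul_mem _ _ (hmem j u)
  | add a b ha hb =>
    rw [Pi.single_add, map_add]
    exact add_mem ha hb

/-- the pairing of `ψ` with `M(P)` -/
noncomputable def pairMP (P : Fin q → Fin p → (MvPolynomial (Fin n) k →ₗ[k] k))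
    (ψ : Fin q → MvPolynomial (Fin n) k) : MP P →ₗ[k] k :=
  ((annP P).restrictScalars k).liftQ
    { toFun := fun φ => ∑ i, ∑ j, P i j (φ j * ψ i)
      map_add' := fun a b => by
        simp [add_mul, Finset.sum_add_distrib]
      map_smul' := fun c a => by
        simp [Finset.mul_sum] }
    (fun φ hφ => (mem_annP_iff P φ).1 hφ ψ)

theorem pairMP_mk (P : Fin q → Fin p → (MvPolynomial (Fin n) k →ₗ[k] k))
    (ψ : Fin q → MvPolynomial (Fin n) k) (φ : Fin p → MvPolynomial (Fin n) k) :
    pairMP P ψ ((annP P).mkQ φ) = ∑ i, ∑ j, P i j (φ j * ψ i) := rfl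

/-- the pairing as an `R`-linear map -/
noncomputable def pairLin (P : Fin q → Fin p → (MvPolynomial (Fin n) k →ₗ[k] k)) :
    (Fin q → MvPolynomial (Fin n) k) →ₗ[MvPolynomial (Fin n) k] (MP P →ₗ[k] k) where
  toFun := pairMP P
  map_add' a b := by
    refine LinearMap.ext fun x => ?_
    obtain ⟨φ, rfl⟩ := (annP P).mkQ_surjective x
    rw [LinearMap.add_apply]
    simp only [pairMP_mk]
    simp [mul_add, Finset.sum_add_distrib]
  map_smul' r a := by
    refine LinearMap.ext fun x => ?_
    obtain ⟨φ, rfl⟩ := (annP P).mkQ_surjective x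
    rw [RingHom.id_apply, R_smul_dual_apply, ← map_smul]
    simp only [pairMP_mk]
    simp only [Pi.smul_apply, smul_eq_mul, mul_assoc, mul_left_comm]

theorem ker_pairLin (P : Fin q → Fin p → (MvPolynomial (Fin n) k →ₗ[k] k)) :
    LinearMap.ker (pairLin P) = annP (fun j i => P i j) := by
  ext ψ
  rw [LinearMap.mem_ker, mem_annP_iff]
  constructor
  · intro h φ
    have := congrArg (fun f => f ((annP P).mkQ φ)) h
    rw [Finset.sum_comm]
    simp only [mul_comm (ψ _)]
    exact this
  · intro h
    refine LinearMap.ext fun x => ?_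
    obtain ⟨φ, rfl⟩ := (annP P).mkQ_surjective x
    have := h φ
    rw [Finset.sum_comm] at this
    simp only [mul_comm (ψ _)] at this
    exact this

theorem dual_surj_aux {V : Type*} [AddCommGroup V] [Module k V] [Module.Finite k V]
    (S : Set (V →ₗ[k] k)) (h0 : (0 : V →ₗ[k] k) ∈ S)
    (hadd : ∀ f g, f ∈ S → g ∈ S → f + g ∈ S)
    (hsmul : ∀ (c : k) (f : V →ₗ[k] k), f ∈ S →
      ∀ g : V →ₗ[k] k, (∀ x, g x = c * f x) → g ∈ S)
    (hsep : ∀ x, (∀ f ∈ S, f x = 0) → x = 0) (f : V →ₗ[k] k) : f ∈ S := by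
  let W : @Submodule k (Module.Dual k V) _ _ LinearMap.module :=
    @Submodule.mk k (Module.Dual k V) _ _ LinearMap.module
      ⟨⟨S, fun {a b} ha hb => hadd a b ha hb⟩, h0⟩
      (fun c f hf => hsmul c f hf _ (fun x => rfl))
  have hW : W = ⊤ := by
    have h := @Subspace.dualCoannihilator_dualAnnihilator_eq k V _ _ _ W inferInstance
    have hb : W.dualCoannihilator = ⊥ := by
      rw [eq_bot_iff]
      intro x hx
      rw [Submodule.mem_dualCoannihilator] at hx
      exact hsep x hx
    rw [← h, hb, Submodule.dualAnnihilator_bot]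
  have : f ∈ W := by
    rw [hW]
    trivial
  exact this

theorem pairLin_surjective (P : Fin q → Fin p → (MvPolynomial (Fin n) k →ₗ[k] k))
    (hP : ∀ i j, IsDividedPower (P i j)) : Function.Surjective (pairLin P) := by
  have := MP_finite P hP
  refine dual_surj_aux (Set.range (pairLin P)) ⟨0, map_zero _⟩ ?_ ?_ ?_
  · rintro _ _ ⟨a, rfl⟩ ⟨b, rfl⟩
    exact ⟨a + b, map_add _ _ _⟩
  · rintro c _ ⟨a, rfl⟩ g hg
    refine ⟨(C c : MvPolynomial (Fin n) k) • a, ?_⟩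
    rw [map_smul]
    refine LinearMap.ext fun x => ?_
    rw [R_smul_dual_apply, hg, ← algebraMap_eq, algebraMap_smul, map_smul, smul_eq_mul]
  · intro x hx
    obtain ⟨φ, rfl⟩ := (annP P).mkQ_surjective x
    refine (Submodule.Quotient.mk_eq_zero _).2 ?_
    rw [mem_annP_iff]
    intro ψ
    exact hx _ ⟨ψ, rfl⟩

/-- For a matrix `P` in divided powers there is a natural isomorphism
of `R`-modules `M(Pᵗ) ≅ Hom_k(M(P), k)` (the dual carrying the contragredient
action). -/
theorem MP_transpose_iso_dual
    (P : Fin q → Fin p → (MvPolynomial (Fin n) k →ₗ[k] k))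
    (hP : ∀ i j, IsDividedPower (P i j)) :
    Nonempty ((MP fun j i => P i j) ≃ₗ[MvPolynomial (Fin n) k]
      ((MP P) →ₗ[k] k)) := by
  exact ⟨(Submodule.quotEquivOfEq _ _ (ker_pairLin P).symm).trans
    ((pairLin P).quotKerEquivOfSurjective (pairLin_surjective P hP))⟩
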